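/- For every N ∈ ℕ and every finite sequence d_1, …, d_n of digits from D = {0, ±1, ±ω, ±ω²} (ω = e^{2πi/3}) with exactly N nonzero terms, the product e A_{d_1} A_{d_2} ⋯ A_{d_n} eᵀ is at most s_N = ⌊(6·2^N + 1)/7⌋; moreover for every N there exists such a sequence with e A_{d_1} ⋯ A_{d_n} eᵀ = s_N. -/

import Mathlib

/-!
All entries are nonnegative, and conjugation by `R` permutes the matrices `A_d`, `d ≠ 0`. Hence up
to a power of `Rᵀ` every column `A_{d_1} ⋯ A_{d_n} eᵀ` is a state `(x, 0, 0, 0, a, b, c)ᵀ`; a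
nonzero digit replaces `(x, a, b, c)` by one of six linear images, chosen by the angle between the
digit and the current rotation, while the digit `0` keeps `x` and kills `a`, `b`, `c`.

For the upper bound, put `P = 2 ^ N`. The inequalities `x + a ≤ P`, `x + c ≤ P`, `2x + b ≤ 2P`
together with `x ≤ s_N`, `x + b ≤ s_{N+1}`, `3x + a + b + c ≤ s_{N+2}` are preserved, with `N`
increased by one, by each of the six maps. They close up because `s_{N+3} = 6P + s_N`: the image of
`3x + a + b + c` is at most `6P + x`, e.g. `7x + 3b = 3(2x + b) + x`.

For attainment, three suitable nonzero digits lead from the state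
`(s_N, P - s_N, 2(P - s_N), P - s_N)` to the corresponding state for `N + 3`.
-/

open Matrix

noncomputable section

/-- The primitive cube root of unity `ω = exp(2πi/3)`. -/
def ω : ℂ := Complex.exp (2 * Real.pi * Complex.I / 3)

/-- The base `β = ω - 1`. -/
def eβ : ℂ := ω - 1

/-- The digit set `D = {0, ±1, ±ω, ±ω²}`. -/
def eD : Set ℂ := {0, 1, -1, ω, -ω, ω ^ 2, -ω ^ 2}

/-- The ring of Eisenstein integers `ℤ[ω]`, as a subset of `ℂ`. -/
def EisZ : Set ℂ := {x | ∃ a b : ℤ, x = (a : ℂ) + (b : ℂ) * ω}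

/-- Value of a digit string `d_{n-1} ⋯ d_0`, given as a list with the least
significant digit first: `eval [d_0, d_1, …, d_{n-1}] = Σ d_j β^j`. -/
def evalE (l : List ℂ) : ℂ :=
  l.foldr (fun d acc => d + eβ * acc) 0

/-- `l` (least significant digit first) is a `(β, D)`-representation of `x`. -/
def eIsRep (x : ℂ) (l : List ℂ) : Prop :=
  (∀ d ∈ l, d ∈ eD) ∧ evalE l = x

/-- A representation is normalized if it is empty or its leading digit
(the last entry of the LSD-first list) is nonzero. -/
def eNormalized (l : List ℂ) : Prop := l.getLast? ≠ some 0

open scoped Classical in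
/-- Number of nonzero digits (Hamming weight). -/
def eweight (l : List ℂ) : ℕ := (l.filter (fun d => d ≠ 0)).length

/-- The row vector `e = (1,0,0,0,0,0,0)`. -/
def e7 : Matrix (Fin 1) (Fin 7) ℤ := !![1,0,0,0,0,0,0]

/-- The permutation matrix `R` fixing coordinate 1 and cyclically permuting
coordinates 2,…,7. -/
def R7 : Matrix (Fin 7) (Fin 7) ℤ :=
  !![1,0,0,0,0,0,0;
     0,0,1,0,0,0,0;
     0,0,0,1,0,0,0;
     0,0,0,0,1,0,0;
     0,0,0,0,0,1,0;
     0,0,0,0,0,0,1;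
     0,1,0,0,0,0,0]

/-- The matrix `A_0`. -/
def E0 : Matrix (Fin 7) (Fin 7) ℤ :=
  !![1,0,0,0,0,0,0;
     0,0,0,0,0,0,0;
     0,0,0,0,0,0,0;
     0,0,0,0,0,0,0;
     0,0,0,0,0,0,0;
     0,0,0,0,0,0,0;
     0,0,0,0,0,0,0]

/-- The matrix `A_1`. -/
def E1 : Matrix (Fin 7) (Fin 7) ℤ :=
  !![1,1,0,0,0,0,0;
     0,0,0,0,0,0,0;
     0,0,0,0,0,0,0;
     0,0,0,0,0,0,0;
     1,0,0,1,0,0,0;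
     2,0,0,1,1,1,0;
     1,0,0,0,0,1,0]

/-- The matrix `A_{-1} = (Rᵀ)³ A_1 R³`. -/
def Em1 : Matrix (Fin 7) (Fin 7) ℤ := (R7ᵀ) ^ 3 * E1 * R7 ^ 3

open scoped Classical in
/-- The matrix `A_d` associated with a digit `d ∈ D`, where
`A_{λ^k} = (Rᵀ)^k A_1 R^k` for `λ = -ω²`. -/
def AmatE (d : ℂ) : Matrix (Fin 7) (Fin 7) ℤ :=
  if d = 0 then E0
  else if d = 1 then E1
  else if d = -ω ^ 2 then (R7ᵀ) ^ 1 * E1 * R7 ^ 1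
  else if d = ω then (R7ᵀ) ^ 2 * E1 * R7 ^ 2
  else if d = -1 then (R7ᵀ) ^ 3 * E1 * R7 ^ 3
  else if d = ω ^ 2 then (R7ᵀ) ^ 4 * E1 * R7 ^ 4
  else (R7ᵀ) ^ 5 * E1 * R7 ^ 5

/-- The sequence `s_N = ⌊(6·2^N + 1)/7⌋`. -/
def sseq (N : ℕ) : ℕ := (6 * 2 ^ N + 1) / 7

lemma sseq_add_three (N : ℕ) : sseq (N + 3) = 6 * 2 ^ N + sseq N := by
  unfold sseq
  rw [pow_add]
  omega

lemma two_pow_le_sseq_succ (N : ℕ) : 2 ^ N ≤ sseq (N + 1) := by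
  have := Nat.one_le_two_pow (n := N)
  unfold sseq
  rw [pow_succ]
  omega

/-- The sixth root of unity `λ = -ω²`, whose powers are the nonzero digits. -/
def lam : ℂ := -ω ^ 2

lemma isPrimitiveRoot_ω : IsPrimitiveRoot ω 3 := by
  simpa only [ω, Nat.cast_ofNat] using Complex.isPrimitiveRoot_exp 3 three_ne_zero

lemma isPrimitiveRoot_lam : IsPrimitiveRoot lam 6 := by
  have h_neg_one : orderOf (-1 : ℂ) = 2 :=
    (IsPrimitiveRoot.neg_one 0 two_ne_zero.symm).eq_orderOf.symm
  have h_ω_sq : orderOf (ω ^ 2) = 3 :=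
    (isPrimitiveRoot_ω.pow_of_coprime 2 (by decide)).eq_orderOf.symm
  have h_mul := (Commute.all (-1) (ω ^ 2)).orderOf_mul_eq_mul_orderOf_of_coprime
    (by rw [h_neg_one, h_ω_sq]; decide)
  rw [IsPrimitiveRoot.iff_orderOf, lam, ← neg_one_mul, h_mul, h_neg_one, h_ω_sq]

lemma lam_pow_ne_zero (n : ℕ) : lam ^ n ≠ 0 :=
  pow_ne_zero n (isPrimitiveRoot_lam.ne_zero (by decide))

lemma lam_pow_two : lam ^ 2 = ω := by
  unfold lam
  linear_combination ω * isPrimitiveRoot_ω.pow_eq_one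

lemma lam_pow_three : lam ^ 3 = -1 := by
  unfold lam
  linear_combination (-ω ^ 3 - 1) * isPrimitiveRoot_ω.pow_eq_one

lemma lam_pow_four : lam ^ 4 = ω ^ 2 := by
  rw [← lam_pow_two, ← pow_mul]

lemma lam_pow_five : lam ^ 5 = -ω := by
  rw [pow_add lam 2 3, lam_pow_two, lam_pow_three, mul_neg_one]

lemma lam_pow_inj (i j : Fin 6) : lam ^ (i : ℕ) = lam ^ (j : ℕ) ↔ i = j :=
  ⟨fun h => Fin.ext (isPrimitiveRoot_lam.pow_inj i.2 j.2 h), fun h => h ▸ rfl⟩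

lemma mem_eD_iff {d : ℂ} : d ∈ eD ↔ d = 0 ∨ ∃ k : Fin 6, d = lam ^ (k : ℕ) := by
  simp only [eD, Set.mem_insert_iff, Set.mem_singleton_iff, Fin.exists_fin_succ,
    Fin.exists_fin_zero, Fin.val_succ, Fin.val_zero, Nat.reduceAdd, pow_zero, pow_one, lam_pow_two,
    lam_pow_three, lam_pow_four, lam_pow_five]
  unfold lam
  tauto

lemma eweight_cons_zero (l : List ℂ) : eweight (0 :: l) = eweight l := by
  simp [eweight]

lemma eweight_cons_of_ne_zero {d : ℂ} (hd : d ≠ 0) (l : List ℂ) :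
    eweight (d :: l) = eweight l + 1 := by
  simp [eweight, hd]

/-- The rotation `(Rᵀ)^k`. Since `R⁶ = 1`, exponents are taken in `Fin 6`, that is, modulo `6`. -/
def rot (k : Fin 6) : Matrix (Fin 7) (Fin 7) ℤ := R7ᵀ ^ (k : ℕ)

lemma rot_zero : rot 0 = 1 :=
  pow_zero _

lemma rot_add (i j : Fin 6) : rot (i + j) = rot i * rot j := by
  have h_six : R7ᵀ ^ 6 = 1 := by decide +kernel
  rw [rot, rot, rot, Fin.val_add, ← pow_eq_pow_mod _ h_six, pow_add]

lemma rot_neg (k : Fin 6) : rot (-k) = R7 ^ (k : ℕ) := by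
  revert k
  decide +kernel

lemma R7_transpose_mulVec (v : Fin 7 → ℤ) :
    R7ᵀ *ᵥ v = ![v 0, v 6, v 1, v 2, v 3, v 4, v 5] := by
  ext i
  fin_cases i <;> simp [R7, mulVec, dotProduct, Fin.sum_univ_succ]

lemma rot_mulVec_apply_zero (k : Fin 6) (v : Fin 7 → ℤ) : (rot k *ᵥ v) 0 = v 0 := by
  have h_row : rot k 0 = Pi.single 0 1 := by
    revert k
    decide +kernel
  rw [mulVec, h_row, single_one_dotProduct]

lemma AmatE_zero : AmatE 0 = E0 :=
  if_pos rfl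

lemma AmatE_lam_pow (k : Fin 6) : AmatE (lam ^ (k : ℕ)) = rot k * E1 * rot (-k) := by
  have h0 : lam ^ (k : ℕ) = 1 ↔ k = 0 := by simpa using lam_pow_inj k 0
  have h1 : lam ^ (k : ℕ) = -ω ^ 2 ↔ k = 1 := by simpa [lam] using lam_pow_inj k 1
  have h2 : lam ^ (k : ℕ) = ω ↔ k = 2 := lam_pow_two ▸ lam_pow_inj k 2
  have h3 : lam ^ (k : ℕ) = -1 ↔ k = 3 := lam_pow_three ▸ lam_pow_inj k 3
  have h4 : lam ^ (k : ℕ) = ω ^ 2 ↔ k = 4 := lam_pow_four ▸ lam_pow_inj k 4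
  simp only [AmatE, lam_pow_ne_zero, h0, h1, h2, h3, h4, rot_neg]
  fin_cases k <;> simp [rot]

/-- The state `(x, a, b, c)`, encoding the column vector `(x, 0, 0, 0, a, b, c)ᵀ`. -/
@[ext]
structure ColState where
  x : ℤ
  a : ℤ
  b : ℤ
  c : ℤ

namespace ColState

/-- The column vector `(x, 0, 0, 0, a, b, c)ᵀ` of a state. -/
def toCol (s : ColState) : Fin 7 → ℤ := ![s.x, 0, 0, 0, s.a, s.b, s.c]

/-- The state `(x, 0, 0, 0)`. -/
def ofFirst (x : ℤ) : ColState := ⟨x, 0, 0, 0⟩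

/-- The effect of a nonzero digit on a state, up to rotation: if the digit is `λ^i` and the current
column is `(Rᵀ)^j (x, 0, 0, 0, a, b, c)ᵀ`, then `k = j - i`. -/
def next (s : ColState) : Fin 6 → ColState
  | 0 => ⟨s.x, s.x, 2 * s.x + s.a + s.b, s.x + s.b⟩
  | 1 => ⟨s.x + s.c, s.x, 2 * s.x + s.a, s.x + s.a⟩
  | 2 => ⟨s.x + s.b, s.x, 2 * s.x, s.x⟩
  | 3 => ⟨s.x + s.a, s.x + s.c, 2 * s.x + s.c, s.x⟩
  | 4 => ⟨s.x, s.x + s.b, 2 * s.x + s.b + s.c, s.x⟩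
  | 5 => ⟨s.x, s.x + s.a, 2 * s.x + s.a + s.b + s.c, s.x + s.c⟩

lemma E0_mulVec_eq_toCol (v : Fin 7 → ℤ) : E0 *ᵥ v = (ofFirst (v 0)).toCol := by
  ext i
  fin_cases i <;> simp [E0, ofFirst, toCol, mulVec, dotProduct, Fin.sum_univ_succ]

lemma E1_mulVec_eq_toCol (v : Fin 7 → ℤ) :
    E1 *ᵥ v = toCol ⟨v 0 + v 1, v 0 + v 3, 2 * v 0 + v 3 + v 4 + v 5, v 0 + v 5⟩ := by
  ext i
  fin_cases i <;> simp [E1, toCol, mulVec, dotProduct, Fin.sum_univ_succ]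
  ring

lemma E1_mulVec_rot_mulVec_toCol (k : Fin 6) (s : ColState) :
    E1 *ᵥ (rot k *ᵥ s.toCol) = (s.next k).toCol := by
  rw [E1_mulVec_eq_toCol]
  fin_cases k <;>
    simp [rot, pow_succ', ← mulVec_mulVec, R7_transpose_mulVec, toCol, next]

lemma AmatE_zero_mulVec_rot_mulVec_toCol (k : Fin 6) (s : ColState) :
    AmatE 0 *ᵥ (rot k *ᵥ s.toCol) = rot 0 *ᵥ (ofFirst s.x).toCol := by
  rw [AmatE_zero, rot_zero, one_mulVec, E0_mulVec_eq_toCol, rot_mulVec_apply_zero]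
  rfl

lemma AmatE_lam_pow_mulVec_rot_mulVec_toCol (i j : Fin 6) (s : ColState) :
    AmatE (lam ^ (i : ℕ)) *ᵥ (rot j *ᵥ s.toCol) = rot i *ᵥ (s.next (j - i)).toCol := by
  rw [AmatE_lam_pow, ← E1_mulVec_rot_mulVec_toCol, sub_eq_neg_add, rot_add]
  simp only [mulVec_mulVec, Matrix.mul_assoc]

/-- `Reachable N s` says that the state `s` arises from `(1, 0, 0, 0)` by processing digits, exactly
`N` of them nonzero. -/
inductive Reachable : ℕ → ColState → Prop
  | start : Reachable 0 (ofFirst 1)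
  | zero {N : ℕ} {s : ColState} : Reachable N s → Reachable N (ofFirst s.x)
  | next {N : ℕ} {s : ColState} (k : Fin 6) : Reachable N s → Reachable (N + 1) (s.next k)

end ColState

section Products

open ColState

lemma e7_mul_mul_transpose_apply (M : Matrix (Fin 7) (Fin 7) ℤ) :
    (e7 * M * e7ᵀ) 0 0 = (M *ᵥ (ofFirst 1).toCol) 0 := by
  simp [e7, ofFirst, toCol, Matrix.mul_apply, vecMul, mulVec, dotProduct, Fin.sum_univ_succ]

/-- The column vector `A_{d_1} ⋯ A_{d_n} eᵀ`. -/
def digitCol (l : List ℂ) : Fin 7 → ℤ := (l.map AmatE).prod *ᵥ (ofFirst 1).toCol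

lemma digitCol_apply_zero (l : List ℂ) :
    digitCol l 0 = (e7 * (l.map AmatE).prod * e7ᵀ) 0 0 :=
  (e7_mul_mul_transpose_apply _).symm

lemma digitCol_nil : digitCol [] = rot 0 *ᵥ (ofFirst 1).toCol := by
  simp [digitCol, rot_zero]

lemma digitCol_cons (d : ℂ) (l : List ℂ) : digitCol (d :: l) = AmatE d *ᵥ digitCol l := by
  simp [digitCol]

lemma exists_reachable_of_digits {l : List ℂ} (hl : ∀ d ∈ l, d ∈ eD) :
    ∃ k s, Reachable (eweight l) s ∧ digitCol l = rot k *ᵥ s.toCol := by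
  induction l with
  | nil => exact ⟨0, _, .start, digitCol_nil⟩
  | cons d l ih =>
    rw [List.forall_mem_cons] at hl
    obtain ⟨j, s, hs, h_col⟩ := ih hl.2
    rw [digitCol_cons, h_col]
    obtain rfl | ⟨i, rfl⟩ := mem_eD_iff.mp hl.1
    · refine ⟨0, ofFirst s.x, ?_, AmatE_zero_mulVec_rot_mulVec_toCol j s⟩
      rw [eweight_cons_zero]
      exact hs.zero
    · refine ⟨i, s.next (j - i), ?_, AmatE_lam_pow_mulVec_rot_mulVec_toCol i j s⟩
      rw [eweight_cons_of_ne_zero (lam_pow_ne_zero _)]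
      exact hs.next _

lemma exists_digits_of_reachable {N : ℕ} {s : ColState} (hs : Reachable N s) :
    ∃ l : List ℂ, (∀ d ∈ l, d ∈ eD) ∧ eweight l = N ∧ ∃ k, digitCol l = rot k *ᵥ s.toCol := by
  induction hs with
  | start => exact ⟨[], by simp, rfl, 0, digitCol_nil⟩
  | @zero N s _ ih =>
    obtain ⟨l, hl, rfl, j, h_col⟩ := ih
    refine ⟨0 :: l, List.forall_mem_cons.mpr ⟨mem_eD_iff.mpr (.inl rfl), hl⟩,
      eweight_cons_zero l, 0, ?_⟩
    rw [digitCol_cons, h_col, AmatE_zero_mulVec_rot_mulVec_toCol]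
  | @next N s k _ ih =>
    obtain ⟨l, hl, rfl, j, h_col⟩ := ih
    refine ⟨lam ^ ((j - k : Fin 6) : ℕ) :: l,
      List.forall_mem_cons.mpr ⟨mem_eD_iff.mpr (.inr ⟨_, rfl⟩), hl⟩,
      eweight_cons_of_ne_zero (lam_pow_ne_zero _) l, j - k, ?_⟩
    rw [digitCol_cons, h_col, AmatE_lam_pow_mulVec_rot_mulVec_toCol, sub_sub_cancel]

lemma exists_digits_iff_exists_reachable (N : ℕ) (m : ℤ) :
    (∃ l : List ℂ, (∀ d ∈ l, d ∈ eD) ∧ eweight l = N ∧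
      (e7 * (l.map AmatE).prod * e7ᵀ) 0 0 = m) ↔ ∃ s, Reachable N s ∧ s.x = m := by
  simp only [← digitCol_apply_zero]
  constructor
  · rintro ⟨l, hl, rfl, rfl⟩
    obtain ⟨k, s, hs, h_col⟩ := exists_reachable_of_digits hl
    exact ⟨s, hs, by rw [h_col, rot_mulVec_apply_zero]; rfl⟩
  · rintro ⟨s, hs, rfl⟩
    obtain ⟨l, hl, hw, k, h_col⟩ := exists_digits_of_reachable hs
    exact ⟨l, hl, hw, by rw [h_col, rot_mulVec_apply_zero]; rfl⟩

end Products

namespace ColState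

/-- The size constraints on states in the upper bound argument, with `P = 2 ^ N` after `N` nonzero
digits. -/
structure Admissible (P : ℤ) (s : ColState) : Prop where
  x_nonneg : 0 ≤ s.x
  a_nonneg : 0 ≤ s.a
  b_nonneg : 0 ≤ s.b
  c_nonneg : 0 ≤ s.c
  x_add_a_le : s.x + s.a ≤ P
  x_add_c_le : s.x + s.c ≤ P
  two_x_add_b_le : 2 * s.x + s.b ≤ 2 * P

namespace Admissible

variable {P : ℤ} {s : ColState}

lemma zero (h : Admissible P s) : Admissible P (ofFirst s.x) := by
  obtain ⟨hx, ha, -, -, hxa, -, -⟩ := h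
  constructor <;> dsimp only [ofFirst] <;> linarith

lemma next (h : Admissible P s) (k : Fin 6) : Admissible (2 * P) (s.next k) := by
  obtain ⟨hx, ha, hb, hc, hxa, hxc, hxb⟩ := h
  constructor <;> fin_cases k <;> dsimp only [ColState.next] <;> linarith

lemma next_x_le (h : Admissible P s) (k : Fin 6) : (s.next k).x ≤ max P (s.x + s.b) := by
  obtain ⟨-, ha, -, -, hxa, hxc, -⟩ := h
  rw [le_max_iff]
  fin_cases k <;> dsimp only [ColState.next] <;> grind

lemma next_x_add_next_b_le (h : Admissible P s) (k : Fin 6) :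
    (s.next k).x + (s.next k).b ≤ 3 * s.x + s.a + s.b + s.c := by
  obtain ⟨-, ha, hb, hc, -⟩ := h
  fin_cases k <;> dsimp only [ColState.next] <;> linarith

lemma three_next_x_add_le (h : Admissible P s) (k : Fin 6) :
    3 * (s.next k).x + (s.next k).a + (s.next k).b + (s.next k).c ≤ 6 * P + s.x := by
  obtain ⟨-, ha, -, -, hxa, hxc, hxb⟩ := h
  fin_cases k <;> dsimp only [ColState.next] <;> linarith

end Admissible

/-- The invariant of the upper bound argument, satisfied by every state reached with `N` nonzero
digits. -/
structure Bounded (N : ℕ) (s : ColState) : Prop where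
  admissible : Admissible (2 ^ N) s
  x_le : s.x ≤ sseq N
  x_add_b_le : s.x + s.b ≤ sseq (N + 1)
  three_x_add_le : 3 * s.x + s.a + s.b + s.c ≤ sseq (N + 2)

namespace Bounded

variable {N : ℕ} {s : ColState}

lemma start : Bounded 0 (ofFirst 1) :=
  ⟨by constructor <;> decide, by decide, by decide, by decide⟩

lemma zero (h : Bounded N s) : Bounded N (ofFirst s.x) := by
  obtain ⟨-, ha, hb, hc, -⟩ := h.admissible
  obtain ⟨hs, hx, hxb, hsum⟩ := h
  refine ⟨hs.zero, hx, ?_, ?_⟩ <;> dsimp only [ofFirst] <;> linarith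

lemma next (h : Bounded N s) (k : Fin 6) : Bounded (N + 1) (s.next k) where
  admissible := pow_succ' (2 : ℤ) N ▸ h.admissible.next k
  x_le := (h.admissible.next_x_le k).trans
    (max_le (mod_cast two_pow_le_sseq_succ N) h.x_add_b_le)
  x_add_b_le := (h.admissible.next_x_add_next_b_le k).trans h.three_x_add_le
  three_x_add_le := calc
    _ ≤ 6 * 2 ^ N + s.x := h.admissible.three_next_x_add_le k
    _ ≤ 6 * 2 ^ N + sseq N := by gcongr; exact h.x_le
    _ = sseq (N + 3) := mod_cast (sseq_add_three N).symm

end Bounded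

lemma Reachable.bounded {N : ℕ} {s : ColState} (hs : Reachable N s) : Bounded N s := by
  induction hs with
  | start => exact .start
  | zero _ ih => exact ih.zero
  | next k _ ih => exact ih.next k

/-- The state attaining the bound `s_N`; it is reached by cycling through the relative
rotations `2, 5, 2`. -/
def extremal (N : ℕ) : ColState :=
  ⟨sseq N, 2 ^ N - sseq N, 2 * (2 ^ N - sseq N), 2 ^ N - sseq N⟩

lemma next_next_next_extremal (N : ℕ) :
    (((extremal N).next 2).next 5).next 2 = extremal (N + 3) := by
  ext <;> simp only [extremal, next, sseq_add_three] <;> push_cast <;> ring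

lemma reachable_extremal : ∀ N, Reachable N (extremal N)
  | 0 => .start
  | 1 => .next 2 .start
  | 2 => .next 2 (.next 2 .start)
  | N + 3 => next_next_next_extremal N ▸ (((reachable_extremal N).next 2).next 5).next 2

end ColState

/-- The maximum of `e A_{d_1} ⋯ A_{d_n} eᵀ` over all digit sequences from `D`
with exactly `N` nonzero terms is `s_N`. -/
theorem stmt17 (N : ℕ) :
    (∀ l : List ℂ, (∀ d ∈ l, d ∈ eD) → eweight l = N →
      (e7 * (l.map AmatE).prod * e7ᵀ) 0 0 ≤ (sseq N : ℤ)) ∧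
    (∃ l : List ℂ, (∀ d ∈ l, d ∈ eD) ∧ eweight l = N ∧
      (e7 * (l.map AmatE).prod * e7ᵀ) 0 0 = (sseq N : ℤ)) := by
  constructor
  · intro l hl hw
    obtain ⟨s, hs, h_eq⟩ := (exists_digits_iff_exists_reachable N _).mp ⟨l, hl, hw, rfl⟩
    rw [← h_eq]
    exact hs.bounded.x_le
  · exact (exists_digits_iff_exists_reachable N _).mpr ⟨_, ColState.reachable_extremal N, rfl⟩
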